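/- arXiv:1301.0138 — 2 statements merged into one kernel-verified Lean document; each statement's English description precedes it below -/
import Mathlib

section
/- For every integer n, the identity −X_{2n+1}(−x,−t) − y = −(x²−y−2)·(S_n(t) + (1−y)·S_{n−1}(t))·((1−y)·S_n(t) + S_{n−1}(t)) holds in ℂ[x,y], where t = y² − y·x² + 2x² − 2. -/
/-!
If `F (m + 2) = u F (m + 1) - F m - c`, then `F (k + 2 n)` is a quadratic form in `S_n(u)` and
`S_{n-1}(u)` whose coefficients depend only on `F k`, `F (k - 1)`, `F (k - 2)` and `c`. For
`F = X` and `k = 1` this form is symmetric, and replacing `y` by `-t` only changes the sign of the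
mixed term, since `S_n(-t) = (-1)^n S_n(t)`. The relation `S_n² + S_{n-1}² - t S_n S_{n-1} = 1`
turns the remaining term `y` into a quadratic form as well, and the resulting form factors.
-/

open Polynomial

/-- The Chebyshev-like polynomials `S n ∈ R[X]` defined by `S 0 = 1`, `S 1 = X` and
`S (n+1) = X * S n - S (n-1)` for all `n : ℤ`. -/
noncomputable def S (R : Type*) [CommRing R] : ℤ → R[X]
  | 0 => 1
  | 1 => X
  | (n : ℕ) + 2 => X * S R (n + 1) - S R n
  | -((n : ℕ) + 1) => X * S R (-n) - S R (-n + 1)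
  termination_by n => Int.natAbs n + Int.natAbs (n - 1)

/-- The variable `x` of `ℂ[x,y]`, realized as `MvPolynomial (Fin 2) ℂ`. -/
noncomputable def xP : MvPolynomial (Fin 2) ℂ := MvPolynomial.X 0

/-- The variable `y` of `ℂ[x,y]`. -/
noncomputable def yP : MvPolynomial (Fin 2) ℂ := MvPolynomial.X 1

/-- The polynomials `X_m ∈ ℂ[x,y]` defined by `X_0 = -2`, `X_1 = -x^2 - y` and
`X_{m+1} = y * X_m - X_{m-1} - 2x^2` for all `m : ℤ`. -/
noncomputable def Xp : ℤ → MvPolynomial (Fin 2) ℂ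
  | 0 => -2
  | 1 => -(MvPolynomial.X 0) ^ 2 - MvPolynomial.X 1
  | (m : ℕ) + 2 => MvPolynomial.X 1 * Xp (m + 1) - Xp m - 2 * (MvPolynomial.X 0) ^ 2
  | -((m : ℕ) + 1) => MvPolynomial.X 1 * Xp (-m) - Xp (-m + 1) - 2 * (MvPolynomial.X 0) ^ 2
  termination_by m => Int.natAbs m + Int.natAbs (m - 1)

/-- The polynomial `t(x,y) = y^2 - y x^2 + 2 x^2 - 2 ∈ ℂ[x,y]`. -/
noncomputable def tP : MvPolynomial (Fin 2) ℂ := yP ^ 2 - yP * xP ^ 2 + 2 * xP ^ 2 - 2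

/-- The substitution homomorphism of `ℂ[x,y]` sending `x ↦ -x` and `y ↦ -t(x,y)`. -/
noncomputable def φ : MvPolynomial (Fin 2) ℂ →ₐ[ℂ] MvPolynomial (Fin 2) ℂ :=
  MvPolynomial.aeval ![-xP, -tP]

theorem S_eq_chebyshevS (R : Type*) [CommRing R] (n : ℤ) : S R n = Chebyshev.S R n := by
  induction n using Chebyshev.induct with
  | zero => rw [S.eq_1, Chebyshev.S_zero]
  | one => rw [S.eq_2, Chebyshev.S_one]
  | add_two n ih₁ ih₀ =>
    rw [Chebyshev.S_add_two, ← ih₁, ← ih₀]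
    exact S.eq_3 R n
  | neg_add_one n ih₀ ih₁ =>
    rw [Chebyshev.S_sub_one, ← ih₀, ← ih₁, ← S.eq_4, Int.negSucc_eq, neg_add']

section Chebyshev

variable {R : Type*} [CommRing R]

theorem chebyshevS_eval_sq_add_sq (n : ℤ) (u : R) :
    (Chebyshev.S R n).eval u ^ 2 + (Chebyshev.S R (n - 1)).eval u ^ 2
      - u * ((Chebyshev.S R n).eval u * (Chebyshev.S R (n - 1)).eval u) = 1 := by
  have h := congrArg (eval u) (Chebyshev.S_sq_add_S_sq R (n - 1))
  simp only [sub_add_cancel, eval_sub, eval_add, eval_mul, eval_pow, eval_X, eval_one] at h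
  linear_combination h

theorem chebyshevS_eval_neg (n : ℤ) (u : R) :
    (Chebyshev.S R n).eval (-u) = n.negOnePow * (Chebyshev.S R n).eval u := by
  induction n using Chebyshev.induct with
  | zero => simp
  | one => simp
  | add_two n ih₁ ih₀ =>
    simp only [Chebyshev.S_add_two, eval_sub, eval_mul, eval_X, ih₁, ih₀, Int.negOnePow_add,
      Int.negOnePow_one, Int.negOnePow_even 2 even_two, Units.val_mul, Units.val_neg, Units.val_one]
    push_cast
    ring
  | neg_add_one n ih₀ ih₁ =>
    simp only [Chebyshev.S_sub_one, eval_sub, eval_mul, eval_X, ih₀, ih₁, Int.negOnePow_add,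
      Int.negOnePow_sub, Int.negOnePow_one, Units.val_mul, Units.val_neg, Units.val_one]
    push_cast
    ring

theorem chebyshevS_eval_neg_sq (n : ℤ) (u : R) :
    (Chebyshev.S R n).eval (-u) ^ 2 = (Chebyshev.S R n).eval u ^ 2 := by
  rcases n.even_or_odd with h | h <;>
    simp [chebyshevS_eval_neg, Int.negOnePow_even, Int.negOnePow_odd, h]

theorem chebyshevS_eval_neg_mul_eval_neg (n : ℤ) (u : R) :
    (Chebyshev.S R n).eval (-u) * (Chebyshev.S R (n - 1)).eval (-u) =
      -((Chebyshev.S R n).eval u * (Chebyshev.S R (n - 1)).eval u) := by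
  rcases n.even_or_odd with h | h <;>
    simp [chebyshevS_eval_neg, Int.negOnePow_even, Int.negOnePow_odd, h]

variable {M : Type*} [AddCommGroup M] [Module R M] {F : ℤ → M} {u : R} {c : M}

/-- Both sides are forms for the same index, `(k + 2) + 2 * n = k + 2 * (n + 1)`, which drives the
induction on `n` in both directions. -/
theorem affine_recurrence_form_shift (hF : ∀ m, F (m + 2) = u • F (m + 1) - F m - c) (k n : ℤ) :
    (Chebyshev.S R n).eval u ^ 2 • F (k + 2)
        - ((Chebyshev.S R n).eval u * (Chebyshev.S R (n - 1)).eval u) • (2 • F (k + 1) + c)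
        + (Chebyshev.S R (n - 1)).eval u ^ 2 • F k =
      (Chebyshev.S R (n + 1)).eval u ^ 2 • F k
        - ((Chebyshev.S R (n + 1)).eval u * (Chebyshev.S R n).eval u) • (2 • F (k - 1) + c)
        + (Chebyshev.S R n).eval u ^ 2 • F (k - 2) := by
  have F_add_one : F (k + 1) = u • F k - F (k - 1) - c := by
    simpa only [sub_add_cancel, show k - 1 + 2 = k + 1 by ring] using hF (k - 1)
  have F_sub_two : F (k - 2) = u • F (k - 1) - F k - c := by
    have h := hF (k - 2)
    rw [sub_add_cancel, show k - 2 + 1 = k - 1 by ring] at h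
    rw [h]
    abel
  simp only [Chebyshev.S_add_one, eval_sub, eval_mul, eval_X, hF, F_add_one, F_sub_two]
  module

theorem affine_recurrence_add_two_mul (hF : ∀ m, F (m + 2) = u • F (m + 1) - F m - c) (k n : ℤ) :
    F (k + 2 * n) =
      (Chebyshev.S R n).eval u ^ 2 • F k
        - ((Chebyshev.S R n).eval u * (Chebyshev.S R (n - 1)).eval u) • (2 • F (k - 1) + c)
        + (Chebyshev.S R (n - 1)).eval u ^ 2 • F (k - 2) := by
  induction n generalizing k with
  | zero => simp
  | succ n ih =>
    have shift := affine_recurrence_form_shift hF k n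
    rw [show k + 2 * ((n : ℤ) + 1) = k + 2 + 2 * n by ring, ih, add_sub_cancel_right,
      add_sub_cancel_right, ← shift, show k + 2 - 1 = k + 1 by ring]
  | pred n ih =>
    have shift := affine_recurrence_form_shift hF (k - 2) (-n - 1)
    rw [show k + 2 * (-(n : ℤ) - 1) = k - 2 + 2 * -n by ring, ih]
    rw [sub_add_cancel, sub_add_cancel, show k - 2 + 1 = k - 1 by ring] at shift
    exact shift.symm

end Chebyshev

theorem Xp_add_two : ∀ m : ℤ, Xp (m + 2) = yP * Xp (m + 1) - Xp m - 2 * xP ^ 2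
  | (k : ℕ) => Xp.eq_3 k
  | -(k + 1 : ℕ) => by
    linear_combination (norm := (simp [Int.negSucc_eq, xP, yP]; ring_nf)) Xp.eq_4 k

theorem Xp_two_mul_add_one (n : ℤ) :
    Xp (2 * n + 1) =
      -(xP ^ 2 + yP) * (aeval yP (S ℂ n) ^ 2 + aeval yP (S ℂ (n - 1)) ^ 2)
        - 2 * (xP ^ 2 - 2) * (aeval yP (S ℂ n) * aeval yP (S ℂ (n - 1))) := by
  have Xp_zero : Xp 0 = -2 := Xp.eq_1
  have Xp_one : Xp 1 = -xP ^ 2 - yP := Xp.eq_2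
  have Xp_neg_one : Xp (-1) = -xP ^ 2 - yP := by
    have h := Xp_add_two (-1)
    norm_num only [Xp_zero, Xp_one] at h
    linear_combination h
  have recurrence (m : ℤ) : Xp (m + 2) = yP • Xp (m + 1) - Xp m - 2 * xP ^ 2 := Xp_add_two m
  rw [add_comm, affine_recurrence_add_two_mul recurrence, sub_self, show (1 - 2 : ℤ) = -1 by rfl,
    Xp_zero, Xp_one, Xp_neg_one]
  simp only [S_eq_chebyshevS, Chebyshev.aeval_S, smul_eq_mul, nsmul_eq_mul]
  push_cast
  ring

theorem φ_Xp_two_mul_add_one (n : ℤ) :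
    φ (Xp (2 * n + 1)) =
      (tP - xP ^ 2) * (aeval tP (S ℂ n) ^ 2 + aeval tP (S ℂ (n - 1)) ^ 2)
        + 2 * (xP ^ 2 - 2) * (aeval tP (S ℂ n) * aeval tP (S ℂ (n - 1))) := by
  have φ_xP : φ xP = -xP := by simp [φ, xP]
  have φ_yP : φ yP = -tP := by simp [φ, yP]
  have φ_S (m : ℤ) : φ (aeval yP (S ℂ m)) = (Chebyshev.S _ m).eval (-tP) := by
    rw [← aeval_algHom_apply, φ_yP, S_eq_chebyshevS, Chebyshev.aeval_S]
  simp only [Xp_two_mul_add_one, map_sub, map_add, map_neg, map_mul, map_pow, map_ofNat φ 2,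
    φ_xP, φ_yP, φ_S, chebyshevS_eval_neg_sq, chebyshevS_eval_neg_mul_eval_neg]
  simp only [S_eq_chebyshevS, Chebyshev.aeval_S]
  ring

/-- `-X_{2n+1}(-x,-t) - y = -(x^2-y-2) (S_n(t) + (1-y) S_{n-1}(t)) ((1-y) S_n(t) + S_{n-1}(t))`
for every integer `n`, where `t = y^2 - y x^2 + 2x^2 - 2`. -/
theorem Xp_odd_substitution (n : ℤ) :
    -φ (Xp (2 * n + 1)) - yP =
      -(xP ^ 2 - yP - 2) * (aeval tP (S ℂ n) + (1 - yP) * aeval tP (S ℂ (n - 1)))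
        * ((1 - yP) * aeval tP (S ℂ n) + aeval tP (S ℂ (n - 1))) := by
  set a := aeval tP (S ℂ n) with ha
  set b := aeval tP (S ℂ (n - 1)) with hb
  have quadratic_relation : a ^ 2 + b ^ 2 - tP * (a * b) = 1 := by
    simpa only [ha, hb, S_eq_chebyshevS, Chebyshev.aeval_S] using chebyshevS_eval_sq_add_sq n tP
  calc -φ (Xp (2 * n + 1)) - yP
      = -φ (Xp (2 * n + 1)) - yP * (a ^ 2 + b ^ 2 - tP * (a * b)) := by
        rw [quadratic_relation, mul_one]
    _ = -(xP ^ 2 - yP - 2) * ((1 - yP) * (a ^ 2 + b ^ 2) + (1 + (1 - yP) ^ 2) * (a * b)) := by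
        rw [φ_Xp_two_mul_add_one, ← ha, ← hb, tP]
        ring
    _ = -(xP ^ 2 - yP - 2) * (a + (1 - yP) * b) * ((1 - yP) * a + b) := by ring
end

section
/- Let p ≥ 5 be an odd integer not divisible by 3, and set d = (p−1)/2 and ℓ = ⌊p/3⌋. Then the polynomials S_d(z) − S_{d−1}(z) and S_{⌊ℓ/2⌋}(z) − S_{⌊ℓ/2⌋−1}(z) are relatively prime in ℂ[z]. -/
open Polynomial

/-!
Put `V n = S n - S (n - 1)` and attach to it the odd number `2 * n + 1`. With `C` the Chebyshev
polynomials given by `C n (2 cos θ) = 2 cos (n θ)`, the identities `V (-k - 1) = V k` and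
`C j * V n = V (n + j) + V (n - j)` yield `V (k + (2 * n + 1)) ≡ -V k` modulo `V n`. Hence the
condition that `V k` lies in the ideal generated by `V m` and `V n` is periodic in `k` with periods
`2 * m + 1` and `2 * n + 1`. If these are coprime, it holds for every `k`, in particular for
`k = 0`, where `V 0 = 1`.
Here the attached numbers are `p` and the odd number nearest to `p / 3`, whose triple differs
from `p` by `2`, so they are coprime.
-/

theorem periodic_of_isCoprime_zsmul {α β : Type*} [AddGroup α] {f : α → β} {a b : ℤ} {c : α}
    (ha : Function.Periodic f (a • c)) (hb : Function.Periodic f (b • c)) (hab : IsCoprime a b) :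
    Function.Periodic f c := by
  obtain ⟨u, v, huv⟩ := hab
  have hc : u • a • c + v • b • c = c := by
    rw [← mul_zsmul', ← mul_zsmul', ← add_zsmul, mul_comm a, mul_comm b, huv, one_zsmul]
  exact hc ▸ (ha.zsmul u).add_period (hb.zsmul v)

theorem isCoprime_two_mul_ediv_six_add_one {p : ℤ} (hodd : Odd p) (h3 : ¬3 ∣ p) :
    IsCoprime p (2 * (p / 6) + 1) := by
  have h2 : IsCoprime 2 (2 * (p / 6) + 1) := Int.isCoprime_two_left.2 (odd_two_mul_add_one _)
  have hp : p = 2 + (2 * (p / 6) + 1) * 3 ∨ p = -2 + (2 * (p / 6) + 1) * 3 := by grind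
  rcases hp with hp | hp
  · simpa only [← hp] using h2.add_mul_left_left 3
  · simpa only [← hp] using h2.neg_left.add_mul_left_left 3

section ChebyshevV

variable (R : Type*) [CommRing R]

theorem S_eq_chebyshev_S (n : ℤ) : S R n = Chebyshev.S R n := by
  induction n using Chebyshev.induct with
  | zero => simp [S]
  | one => simp [S]
  | add_two n ih₁ ih₀ =>
    rw [Chebyshev.S_add_two, ← ih₁, ← ih₀]
    exact S.eq_3 R n
  | neg_add_one n ih₀ ih₁ =>
    rw [Chebyshev.S_sub_one, ← ih₀, ← ih₁, ← neg_add', ← Int.negSucc_eq]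
    exact S.eq_4 R n

theorem chebyshev_C_mul_S (k m : ℤ) :
    Chebyshev.C R k * Chebyshev.S R m = Chebyshev.S R (m + k) + Chebyshev.S R (m - k) := by
  induction k using Chebyshev.induct' with
  | zero => simp [two_mul]
  | one => rw [Chebyshev.C_one, Chebyshev.S_add_one]; ring
  | add_two k ih₁ ih₀ =>
    have hC := Chebyshev.C_add_two R k
    have hadd := Chebyshev.S_add_two R (m + k)
    have hsub := Chebyshev.S_sub_two R (m - k)
    linear_combination (norm := ring_nf)
      Chebyshev.S R m * hC - hadd - hsub - ih₀ + (X : R[X]) * ih₁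
  | neg k ih => rw [Chebyshev.C_neg, ih, sub_neg_eq_add, ← sub_eq_add_neg, add_comm]

/-- The Chebyshev polynomials of the third kind, rescaled like `Chebyshev.S` so that
`V n (2 cos θ) = cos ((n + 1/2) θ) / cos (θ/2)`. Taking differences of `Chebyshev.S` rather than
of `S` gives access to the identities known for the former. -/
noncomputable def chebyshevV (n : ℤ) : R[X] :=
  Chebyshev.S R n - Chebyshev.S R (n - 1)

theorem S_sub_S_sub_one (n : ℤ) : S R n - S R (n - 1) = chebyshevV R n := by
  rw [S_eq_chebyshev_S, S_eq_chebyshev_S, chebyshevV]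

theorem chebyshevV_zero : chebyshevV R 0 = 1 := by
  simp [chebyshevV]

theorem chebyshevV_neg_sub_one (n : ℤ) : chebyshevV R (-n - 1) = chebyshevV R n := by
  rw [chebyshevV, chebyshevV, Chebyshev.S_neg_sub_one, sub_sub, one_add_one_eq_two,
    Chebyshev.S_neg_sub_two]
  ring

theorem chebyshev_C_mul_chebyshevV (k n : ℤ) :
    Chebyshev.C R k * chebyshevV R n = chebyshevV R (n + k) + chebyshevV R (n - k) := by
  simp only [chebyshevV, mul_sub, chebyshev_C_mul_S, sub_add_eq_add_sub, sub_right_comm n 1 k]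
  ring

theorem chebyshevV_dvd_add (k n : ℤ) :
    chebyshevV R n ∣ chebyshevV R (k + (2 * n + 1)) + chebyshevV R k := by
  refine Dvd.intro_left (Chebyshev.C R (k + n + 1)) ?_
  calc Chebyshev.C R (k + n + 1) * chebyshevV R n
      = chebyshevV R (k + (2 * n + 1)) + chebyshevV R (-k - 1) := by
        rw [chebyshev_C_mul_chebyshevV]; ring_nf
    _ = chebyshevV R (k + (2 * n + 1)) + chebyshevV R k := by rw [chebyshevV_neg_sub_one]

variable {R}

theorem periodic_chebyshevV_mem {I : Ideal R[X]} {n : ℤ} (hn : chebyshevV R n ∈ I) :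
    Function.Periodic (fun k ↦ chebyshevV R k ∈ I) (2 * n + 1) := fun k ↦ by
  have hadd := I.mem_of_dvd (chebyshevV_dvd_add R k n) hn
  exact propext ⟨fun h ↦ (I.add_mem_iff_right h).1 hadd, fun h ↦ (I.add_mem_iff_left h).1 hadd⟩

theorem isCoprime_chebyshevV {m n : ℤ} (hmn : IsCoprime (2 * m + 1) (2 * n + 1)) :
    IsCoprime (chebyshevV R m) (chebyshevV R n) := by
  let I : Ideal R[X] := Ideal.span {chebyshevV R m, chebyshevV R n}
  have hm : chebyshevV R m ∈ I := Ideal.subset_span (by simp)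
  have hn : chebyshevV R n ∈ I := Ideal.subset_span (by simp)
  have hper : Function.Periodic (fun k ↦ chebyshevV R k ∈ I) 1 :=
    periodic_of_isCoprime_zsmul (by simpa using periodic_chebyshevV_mem hm)
      (by simpa using periodic_chebyshevV_mem hn) hmn
  have h0 : chebyshevV R 0 ∈ I := by simpa [hm] using hper.int_mul_eq m
  rw [chebyshevV_zero] at h0
  exact Ideal.mem_span_pair.1 h0

variable (R) in
theorem coprime_S_d_S_halfl_general (p : ℤ) (hodd : Odd p) (h3 : ¬3 ∣ p) :
    IsCoprime (S R ((p - 1) / 2) - S R ((p - 1) / 2 - 1))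
      (S R (p / 3 / 2) - S R (p / 3 / 2 - 1)) := by
  have hp : 2 * ((p - 1) / 2) + 1 = p := by grind
  have hdiv : p / 3 / 2 = p / 6 := Int.ediv_ediv_of_nonneg (by norm_num)
  rw [S_sub_S_sub_one, S_sub_S_sub_one, hdiv]
  apply isCoprime_chebyshevV
  rw [hp]
  exact isCoprime_two_mul_ediv_six_add_one hodd h3

end ChebyshevV

/-- For odd `p ≥ 5` not divisible by `3`, with `d = (p-1)/2` and `ℓ = ⌊p/3⌋`,
the polynomials `S_d(z) - S_{d-1}(z)` and `S_{⌊ℓ/2⌋}(z) - S_{⌊ℓ/2⌋-1}(z)` are coprime. -/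
theorem coprime_S_d_S_halfl (p : ℤ) (hp5 : 5 ≤ p) (hodd : Odd p) (h3 : ¬(3 ∣ p)) :
    IsCoprime (S ℂ ((p - 1) / 2) - S ℂ ((p - 1) / 2 - 1))
      (S ℂ (p / 3 / 2) - S ℂ (p / 3 / 2 - 1)) :=
  coprime_S_d_S_halfl_general ℂ p hodd h3
end
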